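/- arXiv:1403.5605 — 2 statements merged into one kernel-verified Lean document; each statement's English description precedes it below -/
import Mathlib

section
/- The Generalized Lamport's Bakery (GLB) algorithm has O(N) remote memory reference complexity in the CC model: there is a constant c such that in every execution, every single invocation (one pass through entry section, critical section and exit section) by any process incurs at most c·N remote memory references. -/
/-! ## Model of the Generalized Lamport's Bakery (GLB) algorithm -/

/-- Program counter of a process in the GLB algorithm.  The doorway is
`setChoosing s` (Choosing[i]:=true), `setSession s` (Session[i]:=s),
`scan s j m` (computing the max of the other token numbers, `j` is the next index
to inspect and `m` the running maximum), `setToken s m` (Token[i]:=m+1) and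
`unsetChoosing s` (Choosing[i]:=false).  The waiting room consists of the two
busy-wait checks `wait1 s j` and `wait2 s j`, and the exit section of
`exit1` (Token[i]:=0) and `exit2` (Session[i]:=0). -/
inductive GLBPc : Type
  | remainder
  | setChoosing (s : ℕ)
  | setSession (s : ℕ)
  | scan (s : ℕ) (j : ℕ) (m : ℕ)
  | setToken (s : ℕ) (m : ℕ)
  | unsetChoosing (s : ℕ)
  | wait1 (s : ℕ) (j : ℕ)
  | wait2 (s : ℕ) (j : ℕ)
  | cs (s : ℕ)
  | exit1
  | exit2
  deriving DecidableEq

/-- Global state: the shared arrays together with each process's control state. -/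
structure GLBState (N : ℕ) where
  session : Fin N → ℕ
  token : Fin N → ℕ
  choosing : Fin N → Bool
  pc : Fin N → GLBPc

def glbInit (N : ℕ) : GLBState N :=
  { session := fun _ => 0, token := fun _ => 0, choosing := fun _ => false,
    pc := fun _ => GLBPc.remainder }

/-- One atomic step of process `i` of the GLB algorithm, transforming state `st`
into `st'`.  A process at `remainder` may stay put or pick an arbitrary positive
session; a failed busy-wait check is a stuttering step; a process in the CS may
stay or move to the exit section. -/
def glbStep {N : ℕ} (st : GLBState N) (i : Fin N) (st' : GLBState N) : Prop :=
  match st.pc i with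
  | .remainder =>
      st' = st ∨ ∃ s : ℕ, 0 < s ∧
        st' = { st with pc := Function.update st.pc i (.setChoosing s) }
  | .setChoosing s =>
      st' = { st with choosing := Function.update st.choosing i true,
                      pc := Function.update st.pc i (.setSession s) }
  | .setSession s =>
      st' = { st with session := Function.update st.session i s,
                      pc := Function.update st.pc i (.scan s 0 0) }
  | .scan s j m =>
      if h : j < N then
        st' = { st with pc := Function.update st.pc i (.scan s (j+1)
                  (if (⟨j, h⟩ : Fin N) = i then m else max m (st.token ⟨j, h⟩))) }
      else
        st' = { st with pc := Function.update st.pc i (.setToken s m) }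
  | .setToken s m =>
      st' = { st with token := Function.update st.token i (m + 1),
                      pc := Function.update st.pc i (.unsetChoosing s) }
  | .unsetChoosing s =>
      st' = { st with choosing := Function.update st.choosing i false,
                      pc := Function.update st.pc i (.wait1 s 0) }
  | .wait1 s j =>
      if h : j < N then
        if st.choosing ⟨j, h⟩ = false ∨ st.session ⟨j, h⟩ = 0 ∨ st.session ⟨j, h⟩ = s then
          st' = { st with pc := Function.update st.pc i (.wait2 s j) }
        else st' = st
      else
        st' = { st with pc := Function.update st.pc i (.cs s) }
  | .wait2 s j =>
      if h : j < N then
        if (st.token i < st.token ⟨j, h⟩ ∨ (st.token i = st.token ⟨j, h⟩ ∧ i.val < j)) ∨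
            st.token ⟨j, h⟩ = 0 ∨ st.session ⟨j, h⟩ = 0 ∨ st.session ⟨j, h⟩ = s then
          st' = { st with pc := Function.update st.pc i (.wait1 s (j+1)) }
        else st' = st
      else st' = st
  | .cs _ =>
      st' = st ∨ st' = { st with pc := Function.update st.pc i .exit1 }
  | .exit1 =>
      st' = { st with token := Function.update st.token i 0,
                      pc := Function.update st.pc i .exit2 }
  | .exit2 =>
      st' = { st with session := Function.update st.session i 0,
                      pc := Function.update st.pc i .remainder }

/-- An execution of the GLB algorithm: an interleaving of atomic steps
(`sched n` is the process taking the `n`-th step), starting from the initial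
state, in which every process outside its remainder section eventually takes
its next step. -/
structure GLBExec (N : ℕ) where
  state : ℕ → GLBState N
  sched : ℕ → Fin N
  init : state 0 = glbInit N
  step : ∀ n, glbStep (state n) (sched n) (state (n + 1))
  fair : ∀ (i : Fin N) (n : ℕ), (state n).pc i ≠ GLBPc.remainder →
           ∃ m, n ≤ m ∧ sched m = i

/-- Process `i` is in the critical section. -/
def glbInCS {N : ℕ} (st : GLBState N) (i : Fin N) : Prop := ∃ s, st.pc i = GLBPc.cs s

/-- Process `i` is in the entry section (doorway or waiting room). -/
def glbInEntry {N : ℕ} (st : GLBState N) (i : Fin N) : Prop :=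
  match st.pc i with
  | .remainder => False
  | .cs _ => False
  | .exit1 => False
  | .exit2 => False
  | _ => True

/-- At step `n`, process `i` leaves the remainder and enters the doorway,
requesting session `s`. -/
def glbEntersDoorway {N : ℕ} (e : GLBExec N) (i : Fin N) (s : ℕ) (n : ℕ) : Prop :=
  (e.state n).pc i = GLBPc.remainder ∧ (e.state (n+1)).pc i = GLBPc.setChoosing s

/-- At step `n`, process `i` completes its doorway (executes Choosing[i]:=false). -/
def glbCompletesDoorway {N : ℕ} (e : GLBExec N) (i : Fin N) (s : ℕ) (n : ℕ) : Prop :=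
  (e.state n).pc i = GLBPc.unsetChoosing s ∧ (e.state (n+1)).pc i = GLBPc.wait1 s 0

/-- At step `n`, process `i` enters the critical section. -/
def glbEntersCS {N : ℕ} (e : GLBExec N) (i : Fin N) (n : ℕ) : Prop :=
  ¬ glbInCS (e.state n) i ∧ glbInCS (e.state (n+1)) i

/-- Process `i` does not pass through the remainder section during `(a, b]`
(so times `a` and `b` belong to the same invocation of `i`). -/
def glbActiveThrough {N : ℕ} (e : GLBExec N) (i : Fin N) (a b : ℕ) : Prop :=
  ∀ k, a < k → k ≤ b → (e.state k).pc i ≠ GLBPc.remainder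

/-! ### Remote memory references in the cache-coherent (CC) model -/

/-- The shared variables of the GLB algorithm. -/
inductive GLBVar (N : ℕ) : Type
  | session (j : Fin N)
  | token (j : Fin N)
  | choosing (j : Fin N)
  deriving DecidableEq

/-- Shared variables read by the next step of process `i` in state `st`. -/
def glbReads {N : ℕ} (st : GLBState N) (i : Fin N) : Finset (GLBVar N) :=
  match st.pc i with
  | .scan _ j _ => if h : j < N then {GLBVar.token ⟨j, h⟩} else ∅
  | .wait1 _ j => if h : j < N then {GLBVar.choosing ⟨j, h⟩, GLBVar.session ⟨j, h⟩} else ∅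
  | .wait2 _ j => if h : j < N then
      {GLBVar.token i, GLBVar.token ⟨j, h⟩, GLBVar.session ⟨j, h⟩} else ∅
  | _ => ∅

/-- Shared variables written by the next step of process `i` in state `st`. -/
def glbWrites {N : ℕ} (st : GLBState N) (i : Fin N) : Finset (GLBVar N) :=
  match st.pc i with
  | .setChoosing _ => {GLBVar.choosing i}
  | .setSession _ => {GLBVar.session i}
  | .setToken _ _ => {GLBVar.token i}
  | .unsetChoosing _ => {GLBVar.choosing i}
  | .exit1 => {GLBVar.token i}
  | .exit2 => {GLBVar.session i}
  | _ => ∅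

/-- `glbCached e n p v` holds iff just before step `n`, process `p` holds a valid
cached copy of variable `v`: a copy is acquired by reading `v` and stays valid
until some process writes `v`. -/
def glbCached {N : ℕ} (e : GLBExec N) : ℕ → Fin N → GLBVar N → Bool
  | 0, _, _ => false
  | n + 1, p, v =>
      (glbCached e n p v || (decide (e.sched n = p) && decide (v ∈ glbReads (e.state n) p)))
        && ! decide (v ∈ glbWrites (e.state n) (e.sched n))

/-- The number of remote memory references incurred by step `n` of the execution:
every write is an RMR, and a read is an RMR iff the stepping process holds no
valid cached copy. -/
def glbStepRMR {N : ℕ} (e : GLBExec N) (n : ℕ) : ℕ :=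
  (glbWrites (e.state n) (e.sched n)).card +
    ((glbReads (e.state n) (e.sched n)).filter
      (fun v => glbCached e n (e.sched n) v = false)).card

/-! Only a failing busy-wait check is repeated, and it is repeated from the cache until the awaited
process `j` writes one of the variables read. Such a write makes a check of `i` fail again at most
once. For the first check it is the write of a new conflicting session, after which `j` scans the
token of `i`, chooses a larger one and stays behind `i`. For the second check it is the write of a
token chosen by a scan that missed the present token of `i`, and no later scan of `j` can miss it.
Hence `i` makes at most nine references between two changes of its program counter, and an
invocation changes it `O(N)` times. -/

section Potential

variable {M : Type*} [AddCommMonoid M] [PartialOrder M] [IsOrderedAddMonoid M]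

theorem sum_Ico_add_le_of_forall_add_succ_le {cost potential : ℕ → M} {a b : ℕ} (hab : a ≤ b)
    (h : ∀ n, a ≤ n → n < b → cost n + potential (n + 1) ≤ potential n) :
    ∑ n ∈ Finset.Ico a b, cost n + potential b ≤ potential a := by
  induction b, hab using Nat.le_induction with
  | base => simp
  | succ b hab ih =>
    calc ∑ n ∈ Finset.Ico a (b + 1), cost n + potential (b + 1)
        = ∑ n ∈ Finset.Ico a b, cost n + (cost b + potential (b + 1)) := by
          rw [Finset.sum_Ico_succ_top hab, add_assoc]
      _ ≤ ∑ n ∈ Finset.Ico a b, cost n + potential b := by gcongr; exact h b hab b.lt_succ_self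
      _ ≤ potential a := ih fun n han hnb => h n han (hnb.trans b.lt_succ_self)

end Potential

section Step

variable {N : ℕ} {st st' : GLBState N} {i p q : Fin N}

theorem glbStep.pc_eq_of_ne (h : glbStep st p st') (hqp : q ≠ p) : st'.pc q = st.pc q := by
  cases hp : st.pc p <;> simp only [glbStep, hp] at h <;> aesop

theorem glbStep.session_eq_of_notMem_glbWrites (h : glbStep st p st')
    (hq : .session q ∉ glbWrites st p) : st'.session q = st.session q := by
  cases hp : st.pc p <;> simp only [glbStep, glbWrites, hp] at h hq <;> aesop

theorem glbStep.token_eq_of_notMem_glbWrites (h : glbStep st p st')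
    (hq : .token q ∉ glbWrites st p) : st'.token q = st.token q := by
  cases hp : st.pc p <;> simp only [glbStep, glbWrites, hp] at h hq <;> aesop

theorem glbStep.choosing_eq_of_notMem_glbWrites (h : glbStep st p st')
    (hq : .choosing q ∉ glbWrites st p) : st'.choosing q = st.choosing q := by
  cases hp : st.pc p <;> simp only [glbStep, glbWrites, hp] at h hq <;> aesop

theorem session_notMem_glbWrites_of_ne (hqp : q ≠ p) : .session q ∉ glbWrites st p := by
  unfold glbWrites; split <;> simp [hqp]

theorem token_notMem_glbWrites_of_ne (hqp : q ≠ p) : .token q ∉ glbWrites st p := by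
  unfold glbWrites; split <;> simp [hqp]

theorem choosing_notMem_glbWrites_of_ne (hqp : q ≠ p) : .choosing q ∉ glbWrites st p := by
  unfold glbWrites; split <;> simp [hqp]

theorem glbReads_congr (h : st'.pc i = st.pc i) : glbReads st' i = glbReads st i := by
  simp only [glbReads, h]

theorem card_glbWrites_add_card_glbReads_le_three (st : GLBState N) (i : Fin N) :
    (glbWrites st i).card + (glbReads st i).card ≤ 3 := by
  cases hi : st.pc i <;> simp only [glbWrites, glbReads, hi] <;> (try split) <;>
    simp [Finset.card_le_three]

end Step

section Invariant

variable {N : ℕ} {st st' : GLBState N} {p q : Fin N}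

/-- The control invariant of a process: its session and token numbers agree with its program
counter. -/
def GLBConsistent (session token : ℕ) : GLBPc → Prop
  | .remainder => session = 0 ∧ token = 0
  | .setChoosing s | .setSession s => 0 < s ∧ session = 0 ∧ token = 0
  | .scan s _ _ | .setToken s _ => 0 < s ∧ session = s ∧ token = 0
  | .unsetChoosing s | .wait1 s _ | .wait2 s _ => 0 < s ∧ session = s ∧ 0 < token
  | .cs _ | .exit1 => True
  | .exit2 => token = 0

theorem glbStep.glbConsistent (h : glbStep st p st')
    (hq : GLBConsistent (st.session q) (st.token q) (st.pc q)) :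
    GLBConsistent (st'.session q) (st'.token q) (st'.pc q) := by
  obtain rfl | hqp := eq_or_ne q p
  · cases hp : st.pc q <;> simp only [glbStep, GLBConsistent, hp] at h hq
    case remainder => obtain rfl | ⟨s, hs, rfl⟩ := h <;> simp [GLBConsistent, *]
    case cs => obtain rfl | rfl := h <;> simp [GLBConsistent, hp]
    all_goals (try split_ifs at h) <;> subst h <;> simp [GLBConsistent, hp, hq]
  · rwa [h.pc_eq_of_ne hqp, h.session_eq_of_notMem_glbWrites (session_notMem_glbWrites_of_ne hqp),
      h.token_eq_of_notMem_glbWrites (token_notMem_glbWrites_of_ne hqp)]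

theorem GLBExec.glbConsistent (e : GLBExec N) (n : ℕ) (q : Fin N) :
    GLBConsistent ((e.state n).session q) ((e.state n).token q) ((e.state n).pc q) := by
  induction n with
  | zero => simp [e.init, glbInit, GLBConsistent]
  | succ n ih => exact (e.step n).glbConsistent ih

end Invariant

section WaitingRoom

variable {N : ℕ} {st st' : GLBState N} {i j p : Fin N} {s k : ℕ}

/-- Process `p` competes for a session other than the session `s` of `i` and cannot overtake `i`:
its token is, or will be, larger than that of `i`, and it has not yet passed `i` in the waiting
room. -/
def GLBQueuedBehind (st : GLBState N) (i : Fin N) (s : ℕ) (p : Fin N) : Prop :=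
  match st.pc p with
  | .scan s' k m => s' ≠ s ∧ (k ≤ i ∨ st.token i ≤ m)
  | .setToken s' m => s' ≠ s ∧ st.token i ≤ m
  | .unsetChoosing s' => s' ≠ s ∧ st.token i < st.token p
  | .wait1 s' k | .wait2 s' k => s' ≠ s ∧ st.token i < st.token p ∧ k ≤ i
  | _ => False

/-- Process `p` scanned `i` before `i` set its present token, and may therefore still choose a
token that does not exceed it. -/
def GLBMayUndercut (st : GLBState N) (i p : Fin N) : Prop :=
  match st.pc p with
  | .scan _ k m => i < k ∧ m < st.token i
  | .setToken _ m => m < st.token i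
  | _ => False

/-- The next step of `i` is a busy-wait check that fails. -/
def GLBSpins (st : GLBState N) (i : Fin N) : Prop :=
  match st.pc i with
  | .wait1 s k => ∃ h : k < N,
      ¬ (st.choosing ⟨k, h⟩ = false ∨ st.session ⟨k, h⟩ = 0 ∨ st.session ⟨k, h⟩ = s)
  | .wait2 s k => ∃ h : k < N,
      ¬ ((st.token i < st.token ⟨k, h⟩ ∨ (st.token i = st.token ⟨k, h⟩ ∧ i.val < k)) ∨
        st.token ⟨k, h⟩ = 0 ∨ st.session ⟨k, h⟩ = 0 ∨ st.session ⟨k, h⟩ = s)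
  | _ => False

/-- A sufficient condition for the busy-wait check at which `i` stands to remain true once it
holds. -/
def GLBSettled (st : GLBState N) (i : Fin N) : Prop :=
  match st.pc i with
  | .wait1 s k => ∃ h : k < N, GLBQueuedBehind st i s ⟨k, h⟩
  | .wait2 _ k => ∀ h : k < N, ¬ GLBMayUndercut st i ⟨k, h⟩
  | _ => True

theorem GLBQueuedBehind.of_glbStep_of_ne (h : glbStep st p st') (hjp : j ≠ p) (hip : i ≠ p)
    (hj : GLBQueuedBehind st i s j) : GLBQueuedBehind st' i s j := by
  rwa [GLBQueuedBehind, h.pc_eq_of_ne hjp,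
    h.token_eq_of_notMem_glbWrites (token_notMem_glbWrites_of_ne hip),
    h.token_eq_of_notMem_glbWrites (token_notMem_glbWrites_of_ne hjp)]

/-- To get past `i`, process `p` would have to pass its second check against `i`, whose token is
smaller. -/
theorem GLBQueuedBehind.of_glbStep (h : glbStep st p st') (hip : i ≠ p) (hs : 0 < s)
    (hsession : st.session i = s) (htoken : 0 < st.token i) (hp : GLBQueuedBehind st i s p) :
    GLBQueuedBehind st' i s p := by
  cases hpc : st.pc p <;> simp only [glbStep, GLBQueuedBehind, hpc] at h hp
  case scan s' k m =>
    obtain ⟨hs', hkm⟩ := hp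
    split_ifs at h with hk hkp
    · have hki : k ≠ i := fun hki => hip (by rw [← hkp]; exact Fin.ext hki.symm)
      subst h
      simp only [GLBQueuedBehind, Function.update_self]
      exact ⟨hs', by omega⟩
    · have hscan : k = i → st.token i ≤ st.token ⟨k, hk⟩ := by rintro rfl; rfl
      subst h
      simp only [GLBQueuedBehind, Function.update_self]
      exact ⟨hs', by omega⟩
    · subst h
      simp only [GLBQueuedBehind, Function.update_self]
      exact ⟨hs', by omega⟩
  case wait2 s' k =>
    obtain ⟨hs', hlt, hki⟩ := hp
    split_ifs at h with hk hpass
    · have hne : k ≠ i := by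
        rintro rfl
        simp only [Fin.eta, hsession] at hpass
        omega
      subst h
      simp only [GLBQueuedBehind, Function.update_self]
      exact ⟨hs', hlt, by omega⟩
    all_goals
      subst h
      simp only [GLBQueuedBehind, hpc]
      exact ⟨hs', hlt, hki⟩
  all_goals
    (try split_ifs at h) <;> subst h <;>
      simp only [GLBQueuedBehind, hpc, ne_eq, hip, not_false_eq_true, Function.update_self,
        Function.update_of_ne] <;>
      omega

theorem GLBMayUndercut.of_glbStep_of_ne (h : glbStep st p st') (hjp : j ≠ p) (hip : i ≠ p)
    (hj : GLBMayUndercut st' i j) : GLBMayUndercut st i j := by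
  rwa [GLBMayUndercut, h.pc_eq_of_ne hjp,
    h.token_eq_of_notMem_glbWrites (token_notMem_glbWrites_of_ne hip)] at hj

/-- Process `p` cannot come to have missed the present token of `i`, since it scans that token
when it reaches `i`. -/
theorem GLBMayUndercut.of_glbStep (h : glbStep st p st') (hip : i ≠ p)
    (hp : GLBMayUndercut st' i p) : GLBMayUndercut st i p := by
  cases hpc : st.pc p <;> simp only [glbStep, hpc] at h
  case scan s' k m =>
    split_ifs at h with hk hkp <;> subst h <;>
      simp only [GLBMayUndercut, Function.update_self, hpc] at hp ⊢
    · have hki : k ≠ i := fun hki => hip (by rw [← hkp]; exact Fin.ext hki.symm)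
      omega
    · have hscan : k = i → st.token i = st.token ⟨k, hk⟩ := by rintro rfl; rfl
      omega
    · omega
  case remainder => obtain rfl | ⟨s, -, rfl⟩ := h <;> simp [GLBMayUndercut, hpc] at hp
  case cs => obtain rfl | rfl := h <;> simp [GLBMayUndercut, hpc] at hp
  all_goals (try split_ifs at h) <;> subst h <;> simp [GLBMayUndercut, hpc] at hp

theorem GLBSettled.of_glbStep (h : glbStep st p st') (hip : i ≠ p)
    (hcon : GLBConsistent (st.session i) (st.token i) (st.pc i)) (hi : GLBSettled st i) :
    GLBSettled st' i := by
  rw [GLBSettled, h.pc_eq_of_ne hip]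
  cases hpc : st.pc i <;> simp only [GLBSettled, GLBConsistent, hpc] at hi hcon ⊢
  case wait1 s k =>
    obtain ⟨hs, hsession, htoken⟩ := hcon
    obtain ⟨hk, hqueued⟩ := hi
    obtain rfl | hkp := eq_or_ne ⟨k, hk⟩ p
    · exact ⟨hk, hqueued.of_glbStep h hip hs hsession htoken⟩
    · exact ⟨hk, hqueued.of_glbStep_of_ne h hkp hip⟩
  case wait2 s k =>
    intro hk hunder
    obtain rfl | hkp := eq_or_ne ⟨k, hk⟩ p
    · exact hi hk (hunder.of_glbStep h hip)
    · exact hi hk (hunder.of_glbStep_of_ne h hkp hip)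

theorem GLBSpins.of_glbStep_of_disjoint (h : glbStep st p st') (hip : i ≠ p)
    (hd : Disjoint (glbReads st i) (glbWrites st p)) (hi : GLBSpins st' i) : GLBSpins st i := by
  have hunwritten := Finset.disjoint_left.1 hd
  rw [GLBSpins, h.pc_eq_of_ne hip] at hi
  cases hpc : st.pc i <;> simp only [GLBSpins, hpc] at hi ⊢
  case wait1 s k =>
    obtain ⟨hk, hfail⟩ := hi
    rw [h.choosing_eq_of_notMem_glbWrites (hunwritten (by simp [glbReads, hpc, hk])),
      h.session_eq_of_notMem_glbWrites (hunwritten (by simp [glbReads, hpc, hk]))] at hfail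
    exact ⟨hk, hfail⟩
  case wait2 s k =>
    obtain ⟨hk, hfail⟩ := hi
    rw [h.token_eq_of_notMem_glbWrites (token_notMem_glbWrites_of_ne hip),
      h.token_eq_of_notMem_glbWrites (hunwritten (by simp [glbReads, hpc, hk])),
      h.session_eq_of_notMem_glbWrites (hunwritten (by simp [glbReads, hpc, hk]))] at hfail
    exact ⟨hk, hfail⟩

theorem glbSettled_of_glbSpins_wait1 (h : glbStep st p st') (hip : i ≠ p)
    (hcon : GLBConsistent (st.session p) (st.token p) (st.pc p)) (hi : st.pc i = .wait1 s k)
    (hd : ¬ Disjoint (glbReads st i) (glbWrites st p)) (hspin : GLBSpins st' i) :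
    ¬ GLBSettled st i ∧ GLBSettled st' i := by
  have hi' : st'.pc i = .wait1 s k := (h.pc_eq_of_ne hip).trans hi
  simp only [GLBSpins, hi'] at hspin
  obtain ⟨hk, hfail⟩ := hspin
  obtain rfl : ⟨k, hk⟩ = p := by
    by_contra hkp
    simp [glbReads, hi, hk, session_notMem_glbWrites_of_ne hkp,
      choosing_notMem_glbWrites_of_ne hkp] at hd
  simp only [GLBSettled, hi, hi', hk, exists_true_left]
  cases hpc : st.pc ⟨k, hk⟩ <;> simp only [glbStep, GLBConsistent, hpc] at h hcon
  case setSession s' =>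
    subst h
    simp_all [GLBQueuedBehind]
  all_goals simp_all [glbReads, glbWrites]

theorem glbSettled_of_glbSpins_wait2 (h : glbStep st p st') (hip : i ≠ p)
    (hcon : GLBConsistent (st.session p) (st.token p) (st.pc p)) (hi : st.pc i = .wait2 s k)
    (hd : ¬ Disjoint (glbReads st i) (glbWrites st p)) (hspin : GLBSpins st' i) :
    ¬ GLBSettled st i ∧ GLBSettled st' i := by
  have hi' : st'.pc i = .wait2 s k := (h.pc_eq_of_ne hip).trans hi
  simp only [GLBSpins, hi'] at hspin
  obtain ⟨hk, hfail⟩ := hspin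
  obtain rfl : ⟨k, hk⟩ = p := by
    by_contra hkp
    simp [glbReads, hi, hk, token_notMem_glbWrites_of_ne hip, token_notMem_glbWrites_of_ne hkp,
      session_notMem_glbWrites_of_ne hkp] at hd
  simp only [GLBSettled, hi, hi', hk, forall_true_left]
  cases hpc : st.pc ⟨k, hk⟩ <;> simp only [glbStep, GLBConsistent, hpc] at h hcon
  case setToken s' m =>
    subst h
    simp_all [GLBMayUndercut]
  all_goals simp_all [glbReads, glbWrites]

theorem GLBSpins.of_glbStep (h : glbStep st p st') (hip : i ≠ p)
    (hcon : GLBConsistent (st.session p) (st.token p) (st.pc p)) (hspin : GLBSpins st' i) :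
    (GLBSpins st i ∧ Disjoint (glbReads st i) (glbWrites st p)) ∨
      (¬ GLBSettled st i ∧ GLBSettled st' i) := by
  by_cases hd : Disjoint (glbReads st i) (glbWrites st p)
  · exact .inl ⟨hspin.of_glbStep_of_disjoint h hip hd, hd⟩
  · right
    cases hpc : st.pc i
    case wait1 s k => exact glbSettled_of_glbSpins_wait1 h hip hcon hpc hd hspin
    case wait2 s k => exact glbSettled_of_glbSpins_wait2 h hip hcon hpc hd hspin
    all_goals simp [GLBSpins, h.pc_eq_of_ne hip, hpc] at hspin

end WaitingRoom

section Rank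

/-- A bound on the number of steps, other than failing busy-wait checks and stays in the critical
section, that a process still takes until it returns to the remainder section. -/
def GLBPc.rank (N : ℕ) : GLBPc → ℕ
  | .remainder => 0
  | .setChoosing _ => 3 * N + 9
  | .setSession _ => 3 * N + 8
  | .scan _ k _ => 2 * N + (N - k) + 7
  | .setToken _ _ => 2 * N + 6
  | .unsetChoosing _ => 2 * N + 5
  | .wait1 _ k => 2 * (N - k) + 4
  | .wait2 _ k => 2 * (N - k) + 3
  | .cs _ => 3
  | .exit1 => 2
  | .exit2 => 1

variable {N : ℕ} {st st' : GLBState N} {i : Fin N}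

theorem GLBPc.rank_le (N : ℕ) (pc : GLBPc) : pc.rank N ≤ 3 * N + 9 := by
  cases pc <;> simp only [rank] <;> omega

theorem glbStep.rank_lt_or_stutter (h : glbStep st i st') (hi : st.pc i ≠ .remainder) :
    (st'.pc i).rank N < (st.pc i).rank N ∨
      st' = st ∧ glbWrites st i = ∅ ∧ (GLBSpins st i ∨ glbReads st i = ∅) := by
  cases hpc : st.pc i <;> simp only [glbStep, hpc] at h
  case remainder => exact absurd hpc hi
  case cs => obtain rfl | rfl := h <;> simp [GLBPc.rank, glbReads, glbWrites, hpc]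
  case wait1 s k =>
    split_ifs at h with hk hpass
    · simp [h, GLBPc.rank]
    · have hspin : GLBSpins st i := by simp only [GLBSpins, hpc]; exact ⟨hk, hpass⟩
      exact .inr ⟨h, by simp [glbWrites, hpc], .inl hspin⟩
    · simp [h, GLBPc.rank]
  case wait2 s k =>
    split_ifs at h with hk hpass
    · left
      simp only [h, GLBPc.rank, Function.update_self]
      omega
    · have hspin : GLBSpins st i := by simp only [GLBSpins, hpc]; exact ⟨hk, hpass⟩
      exact .inr ⟨h, by simp [glbWrites, hpc], .inl hspin⟩
    · exact .inr ⟨h, by simp [glbWrites, hpc], .inr (by simp [glbReads, hpc, hk])⟩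
  all_goals
    left
    (try split_ifs at h) <;> subst h <;> simp only [GLBPc.rank, Function.update_self] <;> omega

end Rank

section Amortization

variable {N : ℕ} {e : GLBExec N} {n : ℕ} {i : Fin N}

/-- The number of variables that are read by the next step of `i` and of which `i` has no valid
cached copy just before step `n`. -/
def glbMisses (e : GLBExec N) (n : ℕ) (i : Fin N) : ℕ :=
  ((glbReads (e.state n) i).filter fun v => glbCached e n i v = false).card

theorem glbMisses_le_card_glbReads : glbMisses e n i ≤ (glbReads (e.state n) i).card :=
  Finset.card_filter_le _ _

theorem glbMisses_le_three : glbMisses e n i ≤ 3 :=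
  glbMisses_le_card_glbReads.trans <|
    (Nat.le_add_left _ _).trans (card_glbWrites_add_card_glbReads_le_three _ _)

theorem glbStepRMR_le_three : glbStepRMR e n ≤ 3 :=
  (Nat.add_le_add_left (Finset.card_filter_le _ _) _).trans
    (card_glbWrites_add_card_glbReads_le_three _ _)

theorem glbMisses_succ_le_of_disjoint (hi : i ≠ e.sched n)
    (hd : Disjoint (glbReads (e.state n) i) (glbWrites (e.state n) (e.sched n))) :
    glbMisses e (n + 1) i ≤ glbMisses e n i := by
  rw [glbMisses, glbReads_congr ((e.step n).pc_eq_of_ne hi)]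
  refine Finset.card_le_card fun v hv => ?_
  have := Finset.disjoint_left.1 hd (Finset.mem_filter.1 hv).1
  simp_all [glbCached]

theorem glbMisses_succ_eq_zero_of_stutter (hi : e.sched n = i)
    (hstate : e.state (n + 1) = e.state n) (hwrites : glbWrites (e.state n) i = ∅) :
    glbMisses e (n + 1) i = 0 := by
  rw [glbMisses, hstate, Finset.card_eq_zero, Finset.filter_eq_empty_iff]
  intro v hv
  simp [glbCached, hi, hv, hwrites]

open Classical in
/-- A bound on the references that `i` still makes at its present program counter: the present
misses of a failing check, `3` for the check that succeeds, and another `3` if the check is not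
settled and may therefore fail afresh. -/
noncomputable def glbSpinCharge (e : GLBExec N) (n : ℕ) (i : Fin N) : ℕ :=
  (if GLBSettled (e.state n) i then 3 else 6) +
    if GLBSpins (e.state n) i then glbMisses e n i else 0

theorem three_le_glbSpinCharge : 3 ≤ glbSpinCharge e n i := by
  unfold glbSpinCharge; split <;> omega

theorem glbSpinCharge_le_nine : glbSpinCharge e n i ≤ 9 := by
  have := glbMisses_le_three (e := e) (n := n) (i := i)
  unfold glbSpinCharge; split_ifs <;> omega

theorem glbSpinCharge_succ_le_of_ne (hi : i ≠ e.sched n) :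
    glbSpinCharge e (n + 1) i ≤ glbSpinCharge e n i := by
  have hsettled := GLBSettled.of_glbStep (e.step n) hi (e.glbConsistent n i)
  have hspins := GLBSpins.of_glbStep (e.step n) hi (e.glbConsistent n _)
  have hmisses := glbMisses_succ_le_of_disjoint hi
  have := glbMisses_le_three (e := e) (n := n + 1) (i := i)
  unfold glbSpinCharge
  grind

theorem glbMisses_add_glbSpinCharge_succ_le_of_stutter (hi : e.sched n = i)
    (hstate : e.state (n + 1) = e.state n) (hwrites : glbWrites (e.state n) i = ∅)
    (hspin : GLBSpins (e.state n) i ∨ glbReads (e.state n) i = ∅) :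
    glbMisses e n i + glbSpinCharge e (n + 1) i ≤ glbSpinCharge e n i := by
  have hnext := glbMisses_succ_eq_zero_of_stutter hi hstate hwrites
  rw [glbSpinCharge, glbSpinCharge, hstate, hnext, ite_self]
  obtain hspin | hreads := hspin
  · rw [if_pos hspin]; omega
  · have hnow : glbMisses e n i = 0 := by simp [glbMisses, hreads]
    omega

/-- An upper bound on the references that `i` makes after time `n` in its present invocation: at
most `9` at each of the program counters it still has to visit. -/
noncomputable def glbPotential (e : GLBExec N) (n : ℕ) (i : Fin N) : ℕ :=
  9 * ((e.state n).pc i).rank N + glbSpinCharge e n i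

theorem glbPotential_le : glbPotential e n i ≤ 27 * N + 90 := by
  have hrank := GLBPc.rank_le N ((e.state n).pc i)
  have hcharge := glbSpinCharge_le_nine (e := e) (n := n) (i := i)
  unfold glbPotential
  omega

theorem glbStepRMR_add_glbPotential_succ_le (hi : (e.state n).pc i ≠ .remainder) :
    (if e.sched n = i then glbStepRMR e n else 0) + glbPotential e (n + 1) i ≤
      glbPotential e n i := by
  unfold glbPotential
  split_ifs with hsched
  · have hstep := e.step n
    rw [hsched] at hstep
    obtain hrank | ⟨hstate, hwrites, hspin⟩ := hstep.rank_lt_or_stutter hi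
    · have hcost := glbStepRMR_le_three (e := e) (n := n)
      have hcharge := three_le_glbSpinCharge (e := e) (n := n) (i := i)
      have hcharge' := glbSpinCharge_le_nine (e := e) (n := n + 1) (i := i)
      omega
    · have hcost : glbStepRMR e n = glbMisses e n i := by
        simp [glbStepRMR, glbMisses, hsched, hwrites]
      have := glbMisses_add_glbSpinCharge_succ_le_of_stutter hsched hstate hwrites hspin
      rw [hcost, hstate]
      omega
  · rw [(e.step n).pc_eq_of_ne (Ne.symm hsched), zero_add]
    gcongr
    exact glbSpinCharge_succ_le_of_ne (Ne.symm hsched)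

end Amortization

theorem glb_rmr_linear_general {N : ℕ} (e : GLBExec N) {i : Fin N} {a b : ℕ}
    (hact : glbActiveThrough e i a b) :
    ∑ k ∈ Finset.Icc a b, (if e.sched k = i then glbStepRMR e k else 0) ≤ 27 * N + 93 := by
  obtain hab | hba := le_or_gt a b
  · have hfirst : (if e.sched a = i then glbStepRMR e a else 0) ≤ 3 := by
      split_ifs
      exacts [glbStepRMR_le_three, Nat.zero_le 3]
    have hrest := sum_Ico_add_le_of_forall_add_succ_le (potential := fun n => glbPotential e n i)
      (cost := fun n => if e.sched n = i then glbStepRMR e n else 0) (Nat.add_le_add_right hab 1)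
      fun n han hnb => glbStepRMR_add_glbPotential_succ_le (hact n han (Nat.le_of_lt_add_one hnb))
    have hpotential := glbPotential_le (e := e) (n := a + 1) (i := i)
    rw [← Finset.add_sum_Ioc_eq_sum_Icc hab, ← Finset.Ico_add_one_add_one_eq_Ioc]
    omega
  · simp [Finset.Icc_eq_empty_of_lt hba]

/-- **O(N) RMR complexity of the GLB algorithm in the CC model.**  There is a constant `c`
such that in every execution with any number `N` of processes, every single invocation by
a process `i` — entered at step `a` (leaving the remainder section) and completed at step
`b` (returning to the remainder section), staying outside the remainder section in
between — incurs at most `c * N` remote memory references. -/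
theorem glb_rmr_linear :
    ∃ c : ℕ, ∀ (N : ℕ) (e : GLBExec N) (i : Fin N) (a b : ℕ),
      (e.state a).pc i = GLBPc.remainder →
      (e.state (a + 1)).pc i ≠ GLBPc.remainder →
      (e.state b).pc i = GLBPc.exit2 →
      (e.state (b + 1)).pc i = GLBPc.remainder →
      a < b →
      glbActiveThrough e i a b →
      (∑ k ∈ Finset.Icc a b, if e.sched k = i then glbStepRMR e k else 0) ≤ c * N := by
  exact ⟨120, fun N e i _ _ _ _ _ _ _ hact =>
    (glb_rmr_linear_general e hact).trans (by have := i.pos; omega)⟩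
end

section
/- In every reachable state of every execution of the BWBGME algorithm, Token[i].number ≤ N+1 for every process P_i; hence all shared variables of the algorithm other than the session field are bounded. -/
/-! ## Model of the Black and White Bakery GME (BWBGME) algorithm -/

inductive Color : Type
  | black
  | white
  deriving DecidableEq

/-- The opposite color. -/
def Color.opp : Color → Color
  | .black => .white
  | .white => .black

/-- A token: a session number, a color in {black, white, ⊥} (`none` is ⊥) and a
token number. -/
structure BWTok where
  session : ℕ
  color : Option Color
  number : ℕ
  deriving DecidableEq

def BWTok.init : BWTok := ⟨0, none, 0⟩

/-- Program counter of a process in the BWBGME algorithm.  The doorway is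
`d1 s` (Token[i]:=(s,⊥,0)), `d2 s` (Choosing[i]:=true, line 4),
`d3 s` (mycolor:=GlobalColor, line 5), `scan s c j m` (the loop computing the max `m`
of the token numbers of conflicting processes with token color `c`; `j` is the next
index to read), `d4 s c m` (Token[i]:=(s,c,m), where `m` is the final mynumber) and
`d5 s c m` (Choosing[i]:=false).  The waiting room iterates, for each `j`:
`w1` (wait until Choosing[j]=false or Token[j].session=s), `wB` (the branch reading
Token[j].color), and the busy-waits `wSame` / `wDiff`.  The exit section is the scan
`x1 s c m j` looking for an active process of the opposite color (entered only when
`m ≠ 1`), `xFlip s c m` (GlobalColor := opposite of `c`) and `x2` (Token[i]:=(0,⊥,0)). -/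
inductive BWPc : Type
  | remainder
  | d1 (s : ℕ)
  | d2 (s : ℕ)
  | d3 (s : ℕ)
  | scan (s : ℕ) (c : Color) (j : ℕ) (m : ℕ)
  | d4 (s : ℕ) (c : Color) (m : ℕ)
  | d5 (s : ℕ) (c : Color) (m : ℕ)
  | w1 (s : ℕ) (c : Color) (m : ℕ) (j : ℕ)
  | wB (s : ℕ) (c : Color) (m : ℕ) (j : ℕ)
  | wSame (s : ℕ) (c : Color) (m : ℕ) (j : ℕ)
  | wDiff (s : ℕ) (c : Color) (m : ℕ) (j : ℕ)
  | cs (s : ℕ) (c : Color) (m : ℕ)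
  | x1 (s : ℕ) (c : Color) (m : ℕ) (j : ℕ)
  | xFlip (s : ℕ) (c : Color) (m : ℕ)
  | x2
  deriving DecidableEq

/-- Global state: GlobalColor, the shared arrays Token and Choosing, and the
control state of each process. -/
structure BWState (N : ℕ) where
  gcolor : Color
  token : Fin N → BWTok
  choosing : Fin N → Bool
  pc : Fin N → BWPc

/-- Initial state; GlobalColor is initialized arbitrarily to `c0`. -/
def bwInit (N : ℕ) (c0 : Color) : BWState N :=
  { gcolor := c0, token := fun _ => BWTok.init, choosing := fun _ => false,
    pc := fun _ => BWPc.remainder }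

/-- One atomic step of process `i` of the BWBGME algorithm. -/
def bwStep {N : ℕ} (st : BWState N) (i : Fin N) (st' : BWState N) : Prop :=
  match st.pc i with
  | .remainder =>
      st' = st ∨ ∃ s : ℕ, 0 < s ∧ st' = { st with pc := Function.update st.pc i (.d1 s) }
  | .d1 s =>
      st' = { st with token := Function.update st.token i ⟨s, none, 0⟩,
                      pc := Function.update st.pc i (.d2 s) }
  | .d2 s =>
      st' = { st with choosing := Function.update st.choosing i true,
                      pc := Function.update st.pc i (.d3 s) }
  | .d3 s =>
      st' = { st with pc := Function.update st.pc i (.scan s st.gcolor 0 0) }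
  | .scan s c j m =>
      if h : j < N then
        st' = { st with pc := Function.update st.pc i (.scan s c (j+1)
                  (if (st.token ⟨j, h⟩).color = some c ∧ (st.token ⟨j, h⟩).session ≠ 0 ∧
                      (st.token ⟨j, h⟩).session ≠ s
                   then max m (st.token ⟨j, h⟩).number else m)) }
      else
        st' = { st with pc := Function.update st.pc i (.d4 s c (m+1)) }
  | .d4 s c m =>
      st' = { st with token := Function.update st.token i ⟨s, some c, m⟩,
                      pc := Function.update st.pc i (.d5 s c m) }
  | .d5 s c m =>
      st' = { st with choosing := Function.update st.choosing i false,
                      pc := Function.update st.pc i (.w1 s c m 0) }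
  | .w1 s c m j =>
      if h : j < N then
        if st.choosing ⟨j, h⟩ = false ∨ (st.token ⟨j, h⟩).session = s then
          st' = { st with pc := Function.update st.pc i (.wB s c m j) }
        else st' = st
      else
        st' = { st with pc := Function.update st.pc i (.cs s c m) }
  | .wB s c m j =>
      if h : j < N then
        if (st.token ⟨j, h⟩).color = some c then
          st' = { st with pc := Function.update st.pc i (.wSame s c m j) }
        else
          st' = { st with pc := Function.update st.pc i (.wDiff s c m j) }
      else st' = st
  | .wSame s c m j =>
      if h : j < N then
        if (m < (st.token ⟨j, h⟩).number ∨ (m = (st.token ⟨j, h⟩).number ∧ i.val < j)) ∨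
            (st.token ⟨j, h⟩).color ≠ some c ∨ (st.token ⟨j, h⟩).session = 0 ∨
            (st.token ⟨j, h⟩).session = s then
          st' = { st with pc := Function.update st.pc i (.w1 s c m (j+1)) }
        else st' = st
      else st' = st
  | .wDiff s c m j =>
      if h : j < N then
        if st.gcolor ≠ c ∨ (st.token ⟨j, h⟩).color = some c ∨
            (st.token ⟨j, h⟩).session = 0 ∨ (st.token ⟨j, h⟩).session = s then
          st' = { st with pc := Function.update st.pc i (.w1 s c m (j+1)) }
        else st' = st
      else st' = st
  | .cs s c m =>
      st' = st ∨
        st' = { st with pc :=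
                  Function.update st.pc i (if m = 1 then BWPc.x2 else BWPc.x1 s c m 0) }
  | .x1 s c m j =>
      if h : j < N then
        if (st.token ⟨j, h⟩).session ≠ 0 ∧ (st.token ⟨j, h⟩).color = some c.opp then
          st' = { st with pc := Function.update st.pc i .x2 }
        else
          st' = { st with pc := Function.update st.pc i (.x1 s c m (j+1)) }
      else
        st' = { st with pc := Function.update st.pc i (.xFlip s c m) }
  | .xFlip _ c _ =>
      st' = { st with gcolor := c.opp, pc := Function.update st.pc i .x2 }
  | .x2 =>
      st' = { st with token := Function.update st.token i BWTok.init,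
                      pc := Function.update st.pc i .remainder }

/-- An execution of the BWBGME algorithm: an interleaving of atomic steps from an
initial state (with arbitrary GlobalColor) in which every process outside its
remainder section eventually takes its next step. -/
structure BWExec (N : ℕ) where
  state : ℕ → BWState N
  sched : ℕ → Fin N
  init : ∃ c0, state 0 = bwInit N c0
  step : ∀ n, bwStep (state n) (sched n) (state (n + 1))
  fair : ∀ (i : Fin N) (n : ℕ), (state n).pc i ≠ BWPc.remainder →
           ∃ m, n ≤ m ∧ sched m = i

/-- Process `i` is in the critical section. -/
def bwInCS {N : ℕ} (st : BWState N) (i : Fin N) : Prop :=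
  ∃ s c m, st.pc i = BWPc.cs s c m

/-- Process `i` is in the entry section (doorway or waiting room). -/
def bwInEntry {N : ℕ} (st : BWState N) (i : Fin N) : Prop :=
  match st.pc i with
  | .remainder => False
  | .cs _ _ _ => False
  | .x1 _ _ _ _ => False
  | .xFlip _ _ _ => False
  | .x2 => False
  | _ => True

/-- At step `n`, process `i` leaves the remainder and enters the doorway,
requesting session `s`. -/
def bwEntersDoorway {N : ℕ} (e : BWExec N) (i : Fin N) (s : ℕ) (n : ℕ) : Prop :=
  (e.state n).pc i = BWPc.remainder ∧ (e.state (n+1)).pc i = BWPc.d1 s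

/-- At step `n`, process `i` completes its doorway (executes Choosing[i]:=false),
having requested session `s` and chosen token color `c` and token number `m`. -/
def bwCompletesDoorway {N : ℕ} (e : BWExec N) (i : Fin N) (s : ℕ) (c : Color) (m : ℕ)
    (n : ℕ) : Prop :=
  (e.state n).pc i = BWPc.d5 s c m ∧ (e.state (n+1)).pc i = BWPc.w1 s c m 0

/-- At step `n`, process `i` executes line 5, reading GlobalColor = `c`
(its invocation requests session `s`). -/
def bwLine5 {N : ℕ} (e : BWExec N) (i : Fin N) (s : ℕ) (c : Color) (n : ℕ) : Prop :=
  (e.state n).pc i = BWPc.d3 s ∧ (e.state (n+1)).pc i = BWPc.scan s c 0 0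

/-- At step `n`, process `i` executes line 4 (Choosing[i]:=true). -/
def bwLine4 {N : ℕ} (e : BWExec N) (i : Fin N) (s : ℕ) (n : ℕ) : Prop :=
  (e.state n).pc i = BWPc.d2 s ∧ (e.state (n+1)).pc i = BWPc.d3 s

/-- At step `n`, process `i` enters the critical section. -/
def bwEntersCS {N : ℕ} (e : BWExec N) (i : Fin N) (n : ℕ) : Prop :=
  ¬ bwInCS (e.state n) i ∧ bwInCS (e.state (n+1)) i

/-- At step `n`, process `i` finishes (leaves) the critical section. -/
def bwLeavesCS {N : ℕ} (e : BWExec N) (i : Fin N) (n : ℕ) : Prop :=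
  bwInCS (e.state n) i ∧ ¬ bwInCS (e.state (n+1)) i

/-- At step `n`, process `i` completes its exit section
(executes Token[i]:=(0,⊥,0) and returns to the remainder section). -/
def bwCompletesExit {N : ℕ} (e : BWExec N) (i : Fin N) (n : ℕ) : Prop :=
  (e.state n).pc i = BWPc.x2 ∧ (e.state (n+1)).pc i = BWPc.remainder

/-- Process `i` does not pass through the remainder section during `(a, b]`
(so times `a` and `b` belong to the same invocation of `i`). -/
def bwActiveThrough {N : ℕ} (e : BWExec N) (i : Fin N) (a b : ℕ) : Prop :=
  ∀ k, a < k → k ≤ b → (e.state k).pc i ≠ BWPc.remainder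

/-- GlobalColor is flipped at step `n`: the step is a write that changes its value. -/
def bwFlipAt {N : ℕ} (e : BWExec N) (n : ℕ) : Prop :=
  (e.state (n+1)).gcolor ≠ (e.state n).gcolor

/-!
Call the *level* of a process the largest number of a conflicting token of its color that it has
seen in its doorway; the number it finally publishes is one more. While `GlobalColor` is `g`, the
levels of color `g` have no gaps: each level `v` with `1 ≤ v < level i` is the level of a
published token. Counting processes, `level i` plus the number of other processes that have read
color `g` but not yet published is at most `N`. Once `GlobalColor` is flipped nobody adopts the
old color any more, and an unpublished process that raises its level reads it off a published
token, whose own bound already counted the reader; so the bound survives.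

A gap could arise only when a process `i` of the current color with number at least `2` leaves
without flipping `GlobalColor`, that is, after seeing an active process `k` of the opposite color.
This cannot happen. If `i` and `k` conflict, then `i` is held up in the waiting room by `k`. If
they request the same session, then `i` has seen a token of its own color with a smaller number
that conflicts with `i`, hence with `k`; its owner is held up by `k` and holds up `i`. By the same
argument nobody has the opposite color when `GlobalColor` is flipped, and the absence of gaps in
the new color holds vacuously.
-/

theorem Color.opp_ne (c : Color) : c.opp ≠ c := by cases c <;> simp [Color.opp]

theorem Color.opp_opp (c : Color) : c.opp.opp = c := by cases c <;> rfl

theorem Color.eq_opp_of_ne {c d : Color} (h : c ≠ d) : c = d.opp := by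
  cases c <;> cases d <;> simp_all [Color.opp]

/-- Progress of a process in the waiting room with respect to a fixed process `k`: iteration `k` not
yet past its first wait, about to read the color of `Token[k]`, waiting in the same-color or in the
different-color branch, iteration `k` finished. -/
inductive BWStage : Type
  | before
  | branching
  | same
  | different
  | passed

namespace BWPc

/-- The program counter lies between line 4 and the end of the doorway, the range in which the
`Choosing` bit of the process is set. -/
def isChoosing : BWPc → Bool
  | .d3 _ | .scan _ _ _ _ | .d4 _ _ _ | .d5 _ _ _ => true
  | _ => false

/-- The process is in its doorway and has read `Token[k]` there. -/
def HasScanned (k : ℕ) : BWPc → Prop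
  | .scan _ _ j _ => k < j
  | .d4 _ _ _ | .d5 _ _ _ => True
  | _ => False

/-- The progress of a process with respect to process `k`, extended by `before` to the remainder
section and the doorway, and by `passed` to the critical and exit sections. -/
def stage (k : ℕ) : BWPc → BWStage
  | .w1 _ _ _ j => if k < j then .passed else .before
  | .wB _ _ _ j => if k < j then .passed else if k = j then .branching else .before
  | .wSame _ _ _ j => if k < j then .passed else if k = j then .same else .before
  | .wDiff _ _ _ j => if k < j then .passed else if k = j then .different else .before
  | .cs _ _ _ | .x1 _ _ _ _ | .xFlip _ _ _ | .x2 => .passed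
  | _ => .before

/-- The program counter agrees with the token `t` of its process, an invariant of every single
process.  The bound `2 ≤ m` at `x1` and `xFlip` records the test `m ≠ 1` made on leaving the
critical section. -/
def HasToken (t : BWTok) : BWPc → Prop
  | .remainder => t = BWTok.init
  | .d1 s => t = BWTok.init ∧ 0 < s
  | .d2 s | .d3 s | .scan s _ _ _ => t = ⟨s, none, 0⟩ ∧ 0 < s
  | .d4 s _ m => t = ⟨s, none, 0⟩ ∧ 0 < s ∧ 1 ≤ m
  | .d5 s c m | .w1 s c m _ | .wB s c m _ | .wSame s c m _ | .wDiff s c m _ | .cs s c m =>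
      t = ⟨s, some c, m⟩ ∧ 0 < s ∧ 1 ≤ m
  | .x1 s c m _ | .xFlip s c m => t = ⟨s, some c, m⟩ ∧ 0 < s ∧ 2 ≤ m
  | .x2 => ∃ s c m, t = ⟨s, some c, m⟩ ∧ 0 < s ∧ 1 ≤ m

theorem HasScanned.isChoosing {p : BWPc} {k : ℕ} (h : p.HasScanned k) : p.isChoosing := by
  cases p <;> simp_all [HasScanned, BWPc.isChoosing]

end BWPc

section
variable {N : ℕ}

namespace BWState

open BWPc

theorem eq_iff_forall {st st' : BWState N} :
    st' = st ↔ st'.gcolor = st.gcolor ∧ (∀ k, st'.token k = st.token k) ∧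
      (∀ k, st'.choosing k = st.choosing k) ∧ ∀ k, st'.pc k = st.pc k := by
  cases st
  cases st'
  simp [funext_iff]

/-- The color of a process: `mycolor` from line 5 until the token is published, and the color of the
token at all other times. -/
def color (st : BWState N) (i : Fin N) : Option Color :=
  match st.pc i with
  | .scan _ c _ _ | .d4 _ c _ => some c
  | _ => (st.token i).color

/-- One less than the token number, or the maximum seen so far if the process is still scanning.
At `d4` the local variable has already been incremented; an uncolored token has level `0` by
truncation. -/
def level (st : BWState N) (i : Fin N) : ℕ :=
  match st.pc i with
  | .scan _ _ _ m => m
  | .d4 _ _ m => m - 1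
  | _ => (st.token i).number - 1

/-- The requested sessions differ.  Session `0` of an inactive process conflicts with every active
process, so activity is required separately where it matters. -/
def Conflict (st : BWState N) (i k : Fin N) : Prop :=
  (st.token i).session ≠ (st.token k).session

/-- The tokens and the `Choosing` bits agree with the program counters. -/
structure Consistent (st : BWState N) : Prop where
  token : ∀ i, (st.pc i).HasToken (st.token i)
  choosing : ∀ i, st.choosing i = (st.pc i).isChoosing

/-- The possible changes of the progress of process `i` with respect to process `k` in one step from
`st`, with the condition of the algorithm that enables each.  In `passSame` the lexicographic
comparison is weakened to the one of the numbers. -/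
inductive WaitStep (st : BWState N) (i k : Fin N) : BWStage → BWStage → Prop
  | stay (a) : st.WaitStep i k a a
  | test (h : (st.pc k).isChoosing = false ∨ ¬ st.Conflict i k) :
      st.WaitStep i k .before .branching
  | branchSame (h : (st.token k).color = (st.token i).color) : st.WaitStep i k .branching .same
  | branchDiff (h : (st.token k).color ≠ (st.token i).color) :
      st.WaitStep i k .branching .different
  | passSame (h : (st.token i).number ≤ (st.token k).number ∨
      (st.token k).color ≠ (st.token i).color ∨ (st.token k).session = 0 ∨ ¬ st.Conflict i k) :
      st.WaitStep i k .same .passed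
  | passDiff (h : (st.token i).color ≠ some st.gcolor ∨
      (st.token k).color = (st.token i).color ∨ (st.token k).session = 0 ∨ ¬ st.Conflict i k) :
      st.WaitStep i k .different .passed

namespace WaitStep

variable {st : BWState N} {i k : Fin N} {a b : BWStage}

theorem source_ne_before (h : st.WaitStep i k a b) (hk : (st.pc k).isChoosing)
    (hik : st.Conflict i k) (hb : b ≠ .before) : a ≠ .before := by
  cases h <;> simp_all

theorem number_le (h : st.WaitStep i k a b) (hki : (st.token k).color = (st.token i).color)
    (hk : (st.token k).session ≠ 0) (hik : st.Conflict i k)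
    (hb : b = .passed ∨ b = .different) :
    (a = .passed ∨ a = .different) ∨ (st.token i).number ≤ (st.token k).number := by
  cases h <;> simp_all

theorem blocked (h : st.WaitStep i k a b) (hki : (st.token k).color ≠ (st.token i).color)
    (hi : (st.token i).color = some st.gcolor) (hk : (st.token k).session ≠ 0)
    (hik : st.Conflict i k)
    (ha : a = .before ∨ (a = .branching ∨ a = .different) ∧ (st.pc k).isChoosing = false) :
    b = .before ∨ (b = .branching ∨ b = .different) ∧ (st.pc k).isChoosing = false := by
  cases h <;> simp_all

end WaitStep

namespace Consistent

variable {st : BWState N} {i : Fin N} {c : Color}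

theorem color_eq (hc : st.Consistent) (hi : (st.token i).color = some c) :
    st.color i = some c := by
  have htok := hc.token i
  cases hp : st.pc i <;> simp only [hp] at htok <;> grind [HasToken, color, BWTok.init]

theorem number_eq (hc : st.Consistent) (hi : (st.token i).color = some c) :
    (st.token i).number = st.level i + 1 := by
  have htok := hc.token i
  cases hp : st.pc i <;> simp only [hp] at htok <;> grind [HasToken, level, BWTok.init]

theorem number_eq_zero (hc : st.Consistent) (hi : (st.token i).color = none) :
    (st.token i).number = 0 := by
  have htok := hc.token i
  cases hp : st.pc i <;> simp only [hp] at htok <;> grind [HasToken, BWTok.init]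

theorem session_ne_zero (hc : st.Consistent) (hi : st.color i = some c) :
    (st.token i).session ≠ 0 := by
  have htok := hc.token i
  cases hp : st.pc i <;> simp only [hp] at htok <;> grind [HasToken, color, BWTok.init]

end Consistent

/-- The processes that have read the color `c` from `GlobalColor` but have not yet published it in
their token. -/
def scanners (st : BWState N) (c : Color) : Finset (Fin N) :=
  {i | st.color i = some c ∧ (st.token i).color ≠ some c}

/-- A published process of the current color makes no progress past a conflicting process of the
opposite color: it is never in the same-color branch for it nor finished with it. -/
def BlockedByOpposite (st : BWState N) : Prop :=
  ∀ i k, (st.token i).color = some st.gcolor → st.color k = some st.gcolor.opp →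
    st.Conflict i k → (st.pc i).stage k = .before ∨
      ((st.pc i).stage k = .branching ∨ (st.pc i).stage k = .different) ∧
        (st.pc k).isChoosing = false

/-- While `i` is past the test of `Choosing[k]`, a doorway of `k` that has read `Token[i]` has seen
the number published there. -/
def DoorwayOrdered (st : BWState N) : Prop :=
  ∀ i k c, (st.token i).color = some c → st.color k = some c → st.Conflict i k →
    (st.pc i).stage k ≠ .before → (st.pc k).HasScanned i → st.level i < st.level k

/-- The bakery order: a process that has passed, or that waits in the different-color branch for, a
conflicting process of its own color does not have the larger number. -/
def WaitingOrdered (st : BWState N) : Prop :=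
  ∀ i k c, (st.token i).color = some c → (st.token k).color = some c → st.Conflict i k →
    ((st.pc i).stage k = .passed ∨ (st.pc i).stage k = .different) → st.level i ≤ st.level k

/-- A positive level of a process of the current color is accounted for by a conflicting published
token of smaller level, as long as a process of its session has the opposite color. -/
def Witnessed (st : BWState N) : Prop :=
  ∀ i k, st.color i = some st.gcolor → st.color k = some st.gcolor.opp → ¬ st.Conflict i k →
    1 ≤ st.level i →
    ∃ z, (st.token z).color = some st.gcolor ∧ st.Conflict z i ∧ st.level z < st.level i

/-- A process about to withdraw a token of the current color has number `1`. -/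
def ExitLevelZero (st : BWState N) : Prop :=
  ∀ i, st.pc i = .x2 → (st.token i).color = some st.gcolor → st.level i = 0

/-- Every positive level below that of a process of the current color belongs to a published token
of the current color. -/
def Gapless (st : BWState N) : Prop :=
  ∀ i v, st.color i = some st.gcolor → 1 ≤ v → v < st.level i →
    ∃ z, (st.token z).color = some st.gcolor ∧ st.level z = v

/-- The level of a process of color `c` leaves room for all other scanners of color `c`, each of
which may still raise the maximum by one. -/
def Bounded (st : BWState N) (c : Color) : Prop :=
  ∀ i, st.color i = some c → st.level i + ((st.scanners c).erase i).card ≤ N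

/-- The inductive invariant of the algorithm.  For the current color the level bound follows from
`gapless`, so it is kept for the opposite color only. -/
structure Invariant (st : BWState N) : Prop where
  consistent : st.Consistent
  blockedByOpposite : st.BlockedByOpposite
  doorwayOrdered : st.DoorwayOrdered
  waitingOrdered : st.WaitingOrdered
  witnessed : st.Witnessed
  exitLevelZero : st.ExitLevelZero
  gapless : st.Gapless
  bounded_opp : st.Bounded st.gcolor.opp

variable {st : BWState N}

theorem Gapless.bounded (h : st.Gapless) : st.Bounded st.gcolor := by
  intro i hi
  let published : Finset (Fin N) := {z | (st.token z).color = some st.gcolor}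
  have hdisj : Disjoint (published.erase i) ((st.scanners st.gcolor).erase i) := by
    refine Finset.disjoint_left.mpr fun z hz hz' => ?_
    simp_all [published, scanners]
  have hsub : published.erase i ∪ (st.scanners st.gcolor).erase i ⊆ Finset.univ.erase i :=
    Finset.union_subset (Finset.erase_subset_erase _ (Finset.subset_univ _))
      (Finset.erase_subset_erase _ (Finset.subset_univ _))
  have hlevels : Finset.Ico 1 (st.level i) ⊆ (published.erase i).image st.level := by
    intro v hv
    obtain ⟨hv1, hvi⟩ := Finset.mem_Ico.mp hv
    obtain ⟨z, hz, rfl⟩ := h i v hi hv1 hvi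
    have hzi : z ≠ i := by
      rintro rfl
      exact hvi.false
    exact Finset.mem_image_of_mem _ (by simp [published, hz, hzi])
  have hpub : st.level i - 1 ≤ (published.erase i).card := by
    simpa using (Finset.card_le_card hlevels).trans Finset.card_image_le
  have hcard := Finset.card_le_card hsub
  rw [Finset.card_union_of_disjoint hdisj, Finset.card_erase_of_mem (Finset.mem_univ i),
    Finset.card_univ, Fintype.card_fin] at hcard
  have hN := i.pos
  omega

theorem Invariant.bounded (h : st.Invariant) (c : Color) : st.Bounded c := by
  by_cases hcg : c = st.gcolor
  · exact hcg ▸ h.gapless.bounded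
  · exact Color.eq_opp_of_ne hcg ▸ h.bounded_opp

theorem Invariant.color_ne_opp (h : st.Invariant) {i : Fin N}
    (hi : (st.token i).color = some st.gcolor) (hl : 1 ≤ st.level i)
    (hpass : ∀ k : Fin N, (st.pc i).stage k = .passed) (k : Fin N) :
    st.color k ≠ some st.gcolor.opp := by
  intro hk
  by_cases hik : st.Conflict i k
  · simpa [hpass] using h.blockedByOpposite i k hi hk hik
  · obtain ⟨z, hz, hzi, hlt⟩ := h.witnessed i k (h.consistent.color_eq hi) hk hik hl
    exact hlt.not_ge (h.waitingOrdered i z _ hi hz hzi.symm (.inl (hpass z)))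

end BWState

namespace bwStep
open BWPc BWState

variable {st st' : BWState N} {i k : Fin N} {c : Color}

theorem frame (h : bwStep st i st') (hk : k ≠ i) :
    st'.pc k = st.pc k ∧ st'.token k = st.token k ∧ st'.choosing k = st.choosing k := by
  cases hp : st.pc i <;> simp only [bwStep, hp, eq_iff_forall, Function.update_apply] at h <;> grind

theorem consistent (h : bwStep st i st') (hc : st.Consistent) : st'.Consistent := by
  suffices (st'.pc i).HasToken (st'.token i) ∧ st'.choosing i = (st'.pc i).isChoosing by
    constructor <;> intro k <;> by_cases hk : k = i
    · exact hk ▸ this.1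
    · rw [(h.frame hk).1, (h.frame hk).2.1]
      exact hc.token k
    · exact hk ▸ this.2
    · rw [(h.frame hk).1, (h.frame hk).2.2]
      exact hc.choosing k
  have htok := hc.token i
  have hch := hc.choosing i
  cases hp : st.pc i <;>
    simp only [bwStep, hp, eq_iff_forall, Function.update_apply] at h htok hch <;>
    grind [HasToken, isChoosing, BWTok.init]

theorem color_eq_of_ne (h : bwStep st i st') (hk : k ≠ i) : st'.color k = st.color k := by
  simp only [color, h.frame hk]

theorem level_eq_of_ne (h : bwStep st i st') (hk : k ≠ i) : st'.level k = st.level k := by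
  simp only [level, h.frame hk]

variable {j : Fin N}

theorem waitStep (h : bwStep st j st') (hc : st.Consistent)
    (hs : (st'.pc i).stage k ≠ .before) :
    st'.token i = st.token i ∧ st.WaitStep i k ((st.pc i).stage k) ((st'.pc i).stage k) := by
  by_cases hij : i = j
  · subst hij
    have htok := hc.token i
    have hch := hc.choosing k
    cases hp : st.pc i <;>
      simp only [bwStep, hp, eq_iff_forall, Function.update_apply] at h htok hch <;>
      grind [HasToken, stage, WaitStep, Conflict]
  · simpa only [h.frame hij, true_and] using WaitStep.stay _

theorem color_cases (h : bwStep st j st') (hc : st.Consistent) (hk : st'.color k = some c) :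
    (st'.token k).session = (st.token k).session ∧
      (c = st.gcolor ∧ c = st'.gcolor ∧ st'.level k = 0 ∨
        st.color k = some c ∧ (st'.level k = st.level k ∨ (st.token k).color = none ∧
          ∃ z, (st.token z).color = some c ∧ st.Conflict z k ∧
            st'.level k = (st.token z).number)) := by
  by_cases hkj : k = j
  · subst hkj
    have htok := hc.token k
    cases hp : st.pc k <;>
      simp only [bwStep, hp, eq_iff_forall, Function.update_apply] at h htok <;>
      grind [HasToken, color, level, Conflict, BWTok.init]
  · grind [h.frame hkj, h.color_eq_of_ne hkj, h.level_eq_of_ne hkj]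

theorem color_of_ne_gcolor (h : bwStep st j st') (hc : st.Consistent) (hg : c ≠ st.gcolor)
    (hk : st'.color k = some c) :
    (st'.token k).session = (st.token k).session ∧ st.color k = some c := by
  obtain ⟨hsk, ⟨hcg, -⟩ | ⟨hck, -⟩⟩ := h.color_cases hc hk
  · exact absurd hcg hg
  · exact ⟨hsk, hck⟩

theorem isChoosing_of_color (h : bwStep st j st') (hc : st.Consistent)
    (hk : st'.color k = some c) (hch : (st'.pc k).isChoosing) : (st.pc k).isChoosing := by
  by_cases hkj : k = j
  · subst hkj
    have htok := hc.token k
    cases hp : st.pc k <;>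
      simp only [bwStep, hp, eq_iff_forall, Function.update_apply] at h htok <;>
      grind [HasToken, color, isChoosing, BWTok.init]
  · rwa [← (h.frame hkj).1]

theorem hasScanned_cases (h : bwStep st j st') (hc : st.Consistent)
    (hk : (st'.pc k).HasScanned i) :
    (st'.token k).session = (st.token k).session ∧ st'.color k = st.color k ∧
      st.level k ≤ st'.level k ∧ (st.pc k).isChoosing ∧ ((st.pc k).HasScanned i ∨
        ((st.token i).color = st.color k → (st.token i).session ≠ 0 → st.Conflict i k →
          (st.token i).number ≤ st'.level k)) := by
  by_cases hkj : k = j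
  · subst hkj
    have htok := hc.token k
    cases hp : st.pc k <;>
      simp only [bwStep, hp, eq_iff_forall, Function.update_apply] at h htok <;>
      grind [HasToken, color, level, isChoosing, HasScanned, Conflict]
  · grind [h.frame hkj, h.color_eq_of_ne hkj, h.level_eq_of_ne hkj, HasScanned.isChoosing]

theorem publish_cases (h : bwStep st j st') (hc : st.Consistent)
    (hk : (st'.token k).color = some c) :
    st'.token k = st.token k ∨ (∀ i : Fin N, (st.pc k).HasScanned i) ∧ st.color k = some c ∧
      (st'.token k).session = (st.token k).session ∧ st'.level k = st.level k := by
  by_cases hkj : k = j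
  · subst hkj
    have htok := hc.token k
    cases hp : st.pc k <;>
      simp only [bwStep, hp, eq_iff_forall, Function.update_apply] at h htok <;>
      grind [HasToken, color, level, HasScanned, BWTok.init]
  · exact .inl (h.frame hkj).2.1

theorem token_eq_or_exits (h : bwStep st j st') (hc : st.Consistent)
    (hk : (st.token k).color = some c) :
    st'.token k = st.token k ∨ st.pc k = .x2 ∧ st'.color k = none := by
  by_cases hkj : k = j
  · subst hkj
    have htok := hc.token k
    cases hp : st.pc k <;>
      simp only [bwStep, hp, eq_iff_forall, Function.update_apply] at h htok <;>
      grind [HasToken, color, BWTok.init]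
  · exact .inl (h.frame hkj).2.1

theorem exit_cases (h : bwStep st j st') (hc : st.Consistent) (hx : st'.pc k = .x2)
    (hk : (st'.token k).color = some c) :
    st'.token k = st.token k ∧ (st.pc k = .x2 ∨ st.level k = 0 ∨
      (∀ i : Fin N, (st.pc k).stage i = .passed) ∧ 1 ≤ st.level k ∧
        ((∃ i, (st.token i).color = some c.opp) ∨ st'.gcolor = c.opp)) := by
  by_cases hkj : k = j
  · subst hkj
    have htok := hc.token k
    cases hp : st.pc k <;>
      simp only [bwStep, hp, eq_iff_forall, Function.update_apply] at h htok <;>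
      grind [HasToken, level, stage]
  · grind [h.frame hkj]

theorem flip_cases (h : bwStep st j st') (hc : st.Consistent) (hg : st'.gcolor ≠ st.gcolor) :
    st'.gcolor = st.gcolor.opp ∧ (st.token j).color = some st.gcolor ∧ 1 ≤ st.level j ∧
      ∀ k : Fin N, (st.pc j).stage k = .passed := by
  have hopp := Color.eq_opp_of_ne hg
  have htok := hc.token j
  cases hp : st.pc j <;>
    simp only [bwStep, hp, eq_iff_forall, Function.update_apply] at h htok <;>
    grind [HasToken, level, stage, Color.opp_opp]

theorem level_eq_of_token_eq (h : bwStep st j st') (hc : st.Consistent)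
    (hk : (st.token k).color = some c) (ht : st'.token k = st.token k) :
    st'.level k = st.level k := by
  have hnumber := hc.number_eq hk
  have hnumber' := (h.consistent hc).number_eq (ht ▸ hk)
  rw [ht] at hnumber'
  omega

theorem doorwayOrdered (h : bwStep st j st') (hc : st.Consistent) (ho : st.DoorwayOrdered) :
    st'.DoorwayOrdered := by
  intro i k c hi hk hik hstage hscan
  obtain ⟨ht, hw⟩ := h.waitStep hc hstage
  obtain ⟨hsk, hck, hlk, hch, hread⟩ := h.hasScanned_cases hc hscan
  rw [ht] at hi
  rw [hck] at hk
  rw [Conflict, ht, hsk] at hik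
  rw [h.level_eq_of_token_eq hc hi ht]
  have hbefore := hw.source_ne_before hch hik hstage
  obtain hold | hnew := hread
  · exact (ho i k c hi hk hik hbefore hold).trans_le hlk
  · have hread := hnew (hi.trans hk.symm) (hc.session_ne_zero (hc.color_eq hi)) hik
    rwa [hc.number_eq hi, Nat.succ_le_iff] at hread

theorem waitingOrdered (h : bwStep st j st') (hc : st.Consistent) (hd : st.DoorwayOrdered)
    (ho : st.WaitingOrdered) : st'.WaitingOrdered := by
  intro i k c hi hk hik hstage
  obtain ⟨hti, hw⟩ := h.waitStep hc (i := i) (k := k) (by grind)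
  rw [hti] at hi
  rw [h.level_eq_of_token_eq hc hi hti]
  obtain htk | ⟨hscan, hck, hsk, hlk⟩ := h.publish_cases hc hk
  · rw [htk] at hk
    rw [Conflict, hti, htk] at hik
    rw [h.level_eq_of_token_eq hc hk htk]
    have hsk := hc.session_ne_zero (hc.color_eq hk)
    obtain hold | hle := hw.number_le (hk.trans hi.symm) hsk hik hstage
    · exact ho i k c hi hk hik hold
    · rwa [hc.number_eq hi, hc.number_eq hk, Nat.succ_le_succ_iff] at hle
  · rw [Conflict, hti, hsk] at hik
    rw [hlk]
    have hbefore := hw.source_ne_before (hscan i).isChoosing hik (by grind)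
    exact (hd i k c hi hck hik hbefore (hscan i)).le

theorem blockedByOpposite (h : bwStep st j st') (hc : st.Consistent)
    (hg : st'.gcolor = st.gcolor) (hb : st.BlockedByOpposite) : st'.BlockedByOpposite := by
  intro i k hi hk hik
  rw [hg] at hi hk
  obtain ⟨hsk, hck⟩ := h.color_of_ne_gcolor hc st.gcolor.opp_ne hk
  have hchk := h.isChoosing_of_color hc hk
  by_cases hstage : (st'.pc i).stage k = .before
  · exact .inl hstage
  obtain ⟨hti, hw⟩ := h.waitStep hc hstage
  rw [hti] at hi
  rw [Conflict, hti, hsk] at hik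
  have hki : (st.token k).color ≠ (st.token i).color := by
    intro hki
    exact st.gcolor.opp_ne (Option.some.inj (hck.symm.trans (hc.color_eq (hki.trans hi))))
  obtain hbefore | ⟨hheld, hchoosing⟩ :=
    hw.blocked hki hi (hc.session_ne_zero hck) hik (hb i k hi hck hik)
  · exact .inl hbefore
  · exact .inr ⟨hheld, Bool.eq_false_iff.mpr fun hk' => by simp [hchk hk'] at hchoosing⟩

theorem witnessed (h : bwStep st j st') (hI : st.Invariant) (hg : st'.gcolor = st.gcolor) :
    st'.Witnessed := by
  intro i k hi hk hik hl
  rw [hg] at hi hk ⊢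
  have hc := hI.consistent
  obtain ⟨hsk, hck⟩ := h.color_of_ne_gcolor hc st.gcolor.opp_ne hk
  obtain ⟨hsi, hci⟩ := h.color_cases hc hi
  rw [Conflict, hsi, hsk] at hik
  obtain ⟨z, hz, hzi, hlt⟩ : ∃ z, (st.token z).color = some st.gcolor ∧ st.Conflict z i ∧
      st.level z < st'.level i := by
    obtain ⟨-, -, h0⟩ | ⟨hci, heq | ⟨-, z, hz, hzi, heq⟩⟩ := hci
    · omega
    · rw [heq] at hl ⊢
      exact hI.witnessed i k hci hck hik hl
    · exact ⟨z, hz, hzi, by rw [heq, hc.number_eq hz]; exact Nat.lt_succ_self _⟩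
  have hzk : st.Conflict z k := by grind [Conflict]
  have hx : st.pc z ≠ .x2 := by
    intro hx
    simpa [hx, stage] using hI.blockedByOpposite z k hz hck hzk
  have ht := (h.token_eq_or_exits hc hz).resolve_right fun hexit => hx hexit.1
  exact ⟨z, by rwa [ht], by rwa [Conflict, ht, hsi], by rwa [h.level_eq_of_token_eq hc hz ht]⟩

theorem exitLevelZero (h : bwStep st j st') (hI : st.Invariant)
    (hg : st'.gcolor = st.gcolor) : st'.ExitLevelZero := by
  intro k hx hk
  rw [hg] at hk
  have hc := hI.consistent
  obtain ⟨ht, hcases⟩ := h.exit_cases hc hx hk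
  rw [ht] at hk
  rw [h.level_eq_of_token_eq hc hk ht]
  obtain hx | h0 | ⟨hpass, hl, ⟨i, hi⟩ | hflip⟩ := hcases
  · exact hI.exitLevelZero k hx hk
  · exact h0
  · exact absurd (hc.color_eq hi) (hI.color_ne_opp hk hl hpass i)
  · exact absurd (hflip.symm.trans hg) st.gcolor.opp_ne

theorem gapless (h : bwStep st j st') (hI : st.Invariant) (hg : st'.gcolor = st.gcolor) :
    st'.Gapless := by
  intro i v hi hv hvl
  rw [hg] at hi ⊢
  have hc := hI.consistent
  obtain ⟨z, hz, hzv⟩ : ∃ z, (st.token z).color = some st.gcolor ∧ st.level z = v := by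
    obtain ⟨-, -, h0⟩ | ⟨hci, heq | ⟨-, z, hz, -, heq⟩⟩ := (h.color_cases hc hi).2
    · omega
    · exact hI.gapless i v hci hv (heq ▸ hvl)
    · rw [heq, hc.number_eq hz, Nat.lt_succ_iff] at hvl
      obtain rfl | hlt := hvl.eq_or_lt
      · exact ⟨z, hz, rfl⟩
      · exact hI.gapless z v (hc.color_eq hz) hv hlt
  have hx : st.pc z ≠ .x2 := by
    intro hx
    have h0 := hI.exitLevelZero z hx hz
    omega
  have ht := (h.token_eq_or_exits hc hz).resolve_right fun hexit => hx hexit.1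
  exact ⟨z, by rwa [ht], by rwa [h.level_eq_of_token_eq hc hz ht]⟩

theorem scanners_subset (h : bwStep st j st') (hc : st.Consistent) (hg : c ≠ st'.gcolor) :
    st'.scanners c ⊆ st.scanners c := by
  intro k hk
  simp only [scanners, Finset.mem_filter, Finset.mem_univ, true_and] at hk ⊢
  obtain ⟨hk, htk⟩ := hk
  obtain ⟨-, hcg, -⟩ | ⟨hck, -⟩ := (h.color_cases hc hk).2
  · exact absurd hcg hg
  · refine ⟨hck, fun hold => ?_⟩
    obtain ht | ⟨-, hnone⟩ := h.token_eq_or_exits hc hold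
    · exact htk (ht ▸ hold)
    · simp [hnone] at hk

theorem bounded (h : bwStep st j st') (hc : st.Consistent) (hg : c ≠ st'.gcolor)
    (hb : st.Bounded c) : st'.Bounded c := by
  intro i hi
  obtain ⟨-, hcg, -⟩ | ⟨hci, hl⟩ := (h.color_cases hc hi).2
  · exact absurd hcg hg
  have hcard : ((st'.scanners c).erase i).card ≤ ((st.scanners c).erase i).card :=
    Finset.card_le_card (Finset.erase_subset_erase i (h.scanners_subset hc hg))
  suffices st'.level i + ((st.scanners c).erase i).card ≤ N by omega
  obtain heq | ⟨hti, z, hz, -, heq⟩ := hl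
  · exact heq ▸ hb i hci
  · have hi_mem : i ∈ st.scanners c := by simp [scanners, hci, hti]
    have hz_notMem : z ∉ st.scanners c := by simp [scanners, hz]
    have hbz := hb z (hc.color_eq hz)
    rw [Finset.erase_eq_of_notMem hz_notMem, ← Finset.card_erase_add_one hi_mem] at hbz
    rw [heq, hc.number_eq hz]
    omega

theorem color_ne_of_flip (h : bwStep st j st') (hI : st.Invariant)
    (hg : st'.gcolor ≠ st.gcolor) (k : Fin N) : st'.color k ≠ some st'.gcolor := by
  intro hk
  obtain ⟨hflip, hj, hl, hpass⟩ := h.flip_cases hI.consistent hg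
  have hck := (h.color_of_ne_gcolor hI.consistent hg hk).2
  exact hI.color_ne_opp hj hl hpass k (hflip ▸ hck)

theorem invariant (h : bwStep st j st') (hI : st.Invariant) : st'.Invariant := by
  have hc := hI.consistent
  have hc' := h.consistent hc
  have hd' := h.doorwayOrdered hc hI.doorwayOrdered
  have hw' := h.waitingOrdered hc hI.doorwayOrdered hI.waitingOrdered
  have hb' := h.bounded hc st'.gcolor.opp_ne (hI.bounded _)
  by_cases hg : st'.gcolor = st.gcolor
  · exact ⟨hc', h.blockedByOpposite hc hg hI.blockedByOpposite, hd', hw', h.witnessed hI hg,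
      h.exitLevelZero hI hg, h.gapless hI hg, hb'⟩
  · have hnone := h.color_ne_of_flip hI hg
    exact ⟨hc', fun i _ hi => absurd (hc'.color_eq hi) (hnone i), hd', hw',
      fun i _ hi => absurd hi (hnone i), fun i _ hi => absurd (hc'.color_eq hi) (hnone i),
      fun i _ hi => absurd hi (hnone i), hb'⟩

end bwStep

theorem bwInit_invariant (g : Color) : (bwInit N g).Invariant := by
  have hcolor : ∀ i c, (bwInit N g).color i ≠ some c := nofun
  have htoken : ∀ i c, ((bwInit N g).token i).color ≠ some c := nofun
  exact
    { consistent := ⟨fun _ => rfl, fun _ => rfl⟩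
      blockedByOpposite := fun i _ hi => absurd hi (htoken i _)
      doorwayOrdered := fun i _ c hi => absurd hi (htoken i c)
      waitingOrdered := fun i _ c hi => absurd hi (htoken i c)
      witnessed := fun i _ hi => absurd hi (hcolor i _)
      exitLevelZero := fun i _ hi => absurd hi (htoken i _)
      gapless := fun i _ hi => absurd hi (hcolor i _)
      bounded_opp := fun i hi => absurd hi (hcolor i _) }

/-- The states reached from an initial state by finitely many steps, under an arbitrary, possibly
unfair, scheduling of the processes. -/
inductive BWState.Reachable : BWState N → Prop
  | init (g : Color) : Reachable (bwInit N g)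
  | step {st st' : BWState N} {i : Fin N} : Reachable st → bwStep st i st' → Reachable st'

theorem BWState.Reachable.invariant {st : BWState N} (h : st.Reachable) : st.Invariant := by
  induction h with
  | init g => exact bwInit_invariant g
  | step _ hstep ih => exact hstep.invariant ih

theorem BWExec.reachable (e : BWExec N) (n : ℕ) : (e.state n).Reachable := by
  induction n with
  | zero =>
    obtain ⟨g, hg⟩ := e.init
    exact hg ▸ .init g
  | succ n ih => exact ih.step (e.step n)

theorem bw_token_number_bounded_general {st : BWState N} (h : st.Reachable) (i : Fin N) :
    (st.token i).number ≤ N + 1 := by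
  have hI := h.invariant
  cases hc : (st.token i).color with
  | none =>
    rw [hI.consistent.number_eq_zero hc]
    exact Nat.zero_le _
  | some c =>
    have hbound := hI.bounded c i (hI.consistent.color_eq hc)
    rw [hI.consistent.number_eq hc]
    omega

end

/-- **Boundedness of the shared registers of the BWBGME algorithm.**  In every reachable
state of every execution, `Token[i].number ≤ N + 1` for every process `i`; hence all
shared variables of the algorithm other than the session field (whose values come from
the application) range over a bounded domain. -/
theorem bw_token_number_bounded {N : ℕ} (e : BWExec N) (n : ℕ) (i : Fin N) :
    ((e.state n).token i).number ≤ N + 1 :=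
  bw_token_number_bounded_general (e.reachable n) i
end
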